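/- arXiv:1801.03929 — 8 statements merged into one kernel-verified Lean document; each statement's English description precedes it below -/
import Mathlib

section
/- Let D be a finite nonempty index set, partitioned into a collection Δ of nonempty domains δ ⊆ D, with positive weights w_δ > 0 and w_d > 0, and let d_C(x,y) = Σ_{δ∈Δ} w_δ · √(Σ_{d∈δ} w_d·(x_d − y_d)²). Let C = {x ∈ ℝ^D : ∀d ∈ D, p⁻_d ≤ x_d ≤ p⁺_d} be an axis-parallel cuboid given by p⁻, p⁺ ∈ ℝ^D. Then C is convex under d_C: for all x, z ∈ C and y ∈ ℝ^D, if d_C(x,y) + d_C(y,z) = d_C(x,z) then y ∈ C. -/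
open Finset

/-- An axis-parallel cuboid is convex under the combined metric
d_C.  The partition of the dimensions `D` into nonempty domains is given by the
fibers of the surjective block map `bl : D → ι`. -/
theorem cuboid_convex_under_combined_metric
    {D ι : Type*} [Fintype D] [Nonempty D] [Fintype ι] [DecidableEq ι]
    (bl : D → ι) (hbl : Function.Surjective bl)
    (wδ : ι → ℝ) (wd : D → ℝ)
    (hwδ : ∀ j, 0 < wδ j) (hwd : ∀ d, 0 < wd d)
    (dC : (D → ℝ) → (D → ℝ) → ℝ)
    (hdC : ∀ x y, dC x y = ∑ j : ι, wδ j *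
      Real.sqrt (∑ d ∈ univ.filter (fun d => bl d = j), wd d * (x d - y d) ^ 2))
    (pm pp : D → ℝ) :
    ∀ x ∈ {x : D → ℝ | ∀ d, pm d ≤ x d ∧ x d ≤ pp d},
    ∀ z ∈ {x : D → ℝ | ∀ d, pm d ≤ x d ∧ x d ≤ pp d},
    ∀ y : D → ℝ, dC x y + dC y z = dC x z →
      y ∈ {x : D → ℝ | ∀ d, pm d ≤ x d ∧ x d ≤ pp d} := by
  intro x hx z hz y hy
  let V : ι → (D → ℝ) → EuclideanSpace ℝ D := fun j u =>
    WithLp.toLp 2 (fun d => if bl d = j then Real.sqrt (wd d) * u d else 0)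
  have hV : ∀ j u v, Real.sqrt (∑ d ∈ univ.filter (fun d => bl d = j), wd d * (u d - v d) ^ 2)
      = dist (V j u) (V j v) := by
    intro j u v
    rw [EuclideanSpace.dist_eq, Finset.sum_filter]
    congr 1
    refine Finset.sum_congr rfl fun d _ => ?_
    rw [Real.dist_eq, sq_abs]
    by_cases h : bl d = j
    · simp only [V, h, if_true]
      rw [← mul_sub, mul_pow, Real.sq_sqrt (hwd d).le]
    · simp [V, h]
  simp only [hdC, hV] at hy
  rw [← Finset.sum_add_distrib] at hy
  have hle : ∀ j ∈ (univ : Finset ι), wδ j * dist (V j x) (V j z) ≤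
      wδ j * dist (V j x) (V j y) + wδ j * dist (V j y) (V j z) := by
    intro j _
    rw [← mul_add]
    exact mul_le_mul_of_nonneg_left (dist_triangle _ _ _) (hwδ j).le
  have heq := (Finset.sum_eq_sum_iff_of_le hle).1 hy.symm
  intro d
  have h1 := heq (bl d) (mem_univ _)
  rw [← mul_add] at h1
  have h2 := mul_left_cancel₀ (hwδ (bl d)).ne' h1
  obtain ⟨t, ⟨ht0, ht1⟩, ht⟩ := dist_add_dist_eq_iff.1 h2.symm
  have h3 := congrArg (fun v : EuclideanSpace ℝ D => v d) ht
  simp [AffineMap.lineMap_apply, V] at h3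
  have hs : 0 < Real.sqrt (wd d) := Real.sqrt_pos.2 (hwd d)
  have h4 : y d = t * (z d - x d) + x d := by
    apply mul_left_cancel₀ hs.ne'
    linarith
  obtain ⟨a, b⟩ := hx d
  obtain ⟨a', b'⟩ := hz d
  rw [h4]
  constructor <;> nlinarith
end

section
/- Let D be a finite nonempty index set, partitioned into a collection Δ of nonempty domains δ ⊆ D, with positive weights w_δ > 0 and w_d > 0. Let d_C(x,y) = Σ_{δ∈Δ} w_δ · √(Σ_{d∈δ} w_d·(x_d − y_d)²) and, for each domain δ, d_E^δ(x,y) = √(Σ_{d∈δ} w_d·(x_d − y_d)²). Then for all x, y, z ∈ ℝ^D the following are equivalent: (i) d_C(x,y) + d_C(y,z) = d_C(x,z); (ii) for every δ ∈ Δ, d_E^δ(x,y) + d_E^δ(y,z) = d_E^δ(x,z); (iii) for every δ ∈ Δ there exists t ∈ [0,1] such that y_d = t·x_d + (1 − t)·z_d for all d ∈ δ. -/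
open Finset

/-- Weighted embedding of a block. -/
noncomputable def blockEmb {D ι : Type*} [DecidableEq ι] (bl : D → ι) (wd : D → ℝ) (j : ι)
    (x : D → ℝ) : EuclideanSpace ℝ D :=
  WithLp.toLp 2 (fun d => if bl d = j then Real.sqrt (wd d) * x d else 0)

lemma blockEmb_dist {D ι : Type*} [Fintype D] [DecidableEq ι] (bl : D → ι) (wd : D → ℝ)
    (hwd : ∀ d, 0 < wd d) (j : ι) (x y : D → ℝ) :
    Real.sqrt (∑ d ∈ univ.filter (fun d => bl d = j), wd d * (x d - y d) ^ 2) =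
      dist (blockEmb bl wd j x) (blockEmb bl wd j y) := by
  rw [EuclideanSpace.dist_eq, Finset.sum_filter]
  congr 1
  refine Finset.sum_congr rfl fun d _ => ?_
  by_cases h : bl d = j
  · simp only [blockEmb, h, if_true, Real.dist_eq, sq_abs]
    rw [← mul_sub, mul_pow, Real.sq_sqrt (hwd d).le]
  · simp [blockEmb, h]

lemma blockEmb_wbtw {D ι : Type*} [Fintype D] [DecidableEq ι] (bl : D → ι) (wd : D → ℝ)
    (hwd : ∀ d, 0 < wd d) (j : ι) (x y z : D → ℝ) :
    Wbtw ℝ (blockEmb bl wd j x) (blockEmb bl wd j y) (blockEmb bl wd j z) ↔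
    ∃ t ∈ Set.Icc (0 : ℝ) 1, ∀ d, bl d = j → y d = t * x d + (1 - t) * z d := by
  constructor
  · rintro ⟨t, ht, h⟩
    refine ⟨1 - t, ⟨by linarith [ht.2], by linarith [ht.1]⟩, fun d hd => ?_⟩
    have h2 := congrArg (fun v : EuclideanSpace ℝ D => v d) h
    simp [blockEmb, AffineMap.lineMap_apply, hd] at h2
    have hs : Real.sqrt (wd d) ≠ 0 := (Real.sqrt_pos.2 (hwd d)).ne'
    apply mul_left_cancel₀ hs
    rw [← h2]; ring
  · rintro ⟨t, ht, h⟩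
    refine ⟨1 - t, ⟨by linarith [ht.2], by linarith [ht.1]⟩, ?_⟩
    ext d
    by_cases hd : bl d = j
    · simp [blockEmb, AffineMap.lineMap_apply, hd]
      rw [h d hd]; ring
    · simp [blockEmb, AffineMap.lineMap_apply, hd]

/-- Equivalence of (i) metric betweenness under the combined
metric d_C, (ii) simultaneous metric betweenness under each intra-domain
weighted Euclidean metric, and (iii) per-domain convex combinations.  The
partition of `D` into nonempty domains is given by the fibers of the
surjective block map `bl : D → ι`. -/
theorem combined_betweenness_characterization
    {D ι : Type*} [Fintype D] [Nonempty D] [Fintype ι] [DecidableEq ι]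
    (bl : D → ι) (hbl : Function.Surjective bl)
    (wδ : ι → ℝ) (wd : D → ℝ)
    (hwδ : ∀ j, 0 < wδ j) (hwd : ∀ d, 0 < wd d)
    (dC : (D → ℝ) → (D → ℝ) → ℝ)
    (hdC : ∀ x y, dC x y = ∑ j : ι, wδ j *
      Real.sqrt (∑ d ∈ univ.filter (fun d => bl d = j), wd d * (x d - y d) ^ 2))
    (dE : ι → (D → ℝ) → (D → ℝ) → ℝ)
    (hdE : ∀ j x y, dE j x y =
      Real.sqrt (∑ d ∈ univ.filter (fun d => bl d = j), wd d * (x d - y d) ^ 2))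
    (x y z : D → ℝ) :
    (dC x y + dC y z = dC x z ↔ ∀ j : ι, dE j x y + dE j y z = dE j x z) ∧
    ((∀ j : ι, dE j x y + dE j y z = dE j x z) ↔
      ∀ j : ι, ∃ t ∈ Set.Icc (0 : ℝ) 1,
        ∀ d, bl d = j → y d = t * x d + (1 - t) * z d) := by
  simp only [blockEmb_dist bl wd hwd] at hdC hdE
  simp only [hdC, hdE]
  refine ⟨?_, forall_congr' fun j => ?_⟩
  · rw [← Finset.sum_add_distrib, eq_comm, Finset.sum_eq_sum_iff_of_le]
    · refine ⟨fun h j => ?_, fun h j _ => ?_⟩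
      · have := h j (Finset.mem_univ j)
        rw [← mul_add] at this
        exact (mul_left_cancel₀ (hwδ j).ne' this).symm
      · rw [← mul_add, h j]
    · intro j _
      rw [← mul_add]
      exact mul_le_mul_of_nonneg_left (dist_triangle _ _ _) (hwδ j).le
  · rw [dist_add_dist_eq_iff, blockEmb_wbtw bl wd hwd]
end

section
/- Let D be a finite nonempty index set with positive weights w_d > 0 and let d_M(x,y) = Σ_{d∈D} w_d·|x_d − y_d| be the weighted Manhattan metric on ℝ^D. A nonempty set S ⊆ ℝ^D is convex under d_M (i.e., for all x, z ∈ S, every y with d_M(x,y) + d_M(y,z) = d_M(x,z) lies in S) if and only if S is an axis-parallel cuboid, i.e., S = ∏_{d∈D} I_d is a product of order-convex subsets I_d ⊆ ℝ (intervals, possibly unbounded). -/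
/-- A nonempty set is convex under the weighted Manhattan metric
iff it is an axis-parallel cuboid, i.e. a product of order-convex subsets of
ℝ (intervals, possibly unbounded). -/
theorem manhattan_convex_iff_cuboid
    {D : Type*} [Fintype D] [Nonempty D]
    (w : D → ℝ) (hw : ∀ d, 0 < w d)
    (S : Set (D → ℝ)) (hS : S.Nonempty) :
    (∀ x ∈ S, ∀ z ∈ S, ∀ y : D → ℝ,
        (∑ d, w d * |x d - y d|) + (∑ d, w d * |y d - z d|) =
          (∑ d, w d * |x d - z d|) → y ∈ S) ↔
    ∃ I : D → Set ℝ,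
      (∀ d, ∀ a ∈ I d, ∀ b ∈ I d, ∀ c : ℝ, a ≤ c → c ≤ b → c ∈ I d) ∧
      S = {x : D → ℝ | ∀ d, x d ∈ I d} := by
  classical
  constructor
  · intro h
    have hb : ∀ x ∈ S, ∀ z ∈ S, ∀ y : D → ℝ,
        (∀ d, |x d - y d| + |y d - z d| = |x d - z d|) → y ∈ S := by
      intro x hx z hz y hy
      apply h x hx z hz y
      rw [← Finset.sum_add_distrib]
      refine Finset.sum_congr rfl fun d _ => ?_
      rw [← hy d]; ring
    have hu : ∀ x ∈ S, ∀ z ∈ S, ∀ d : D, ∀ c : ℝ,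
        |x d - c| + |c - z d| = |x d - z d| → Function.update x d c ∈ S := by
      intro x hx z hz d c hc
      apply hb x hx z hz
      intro e
      by_cases he : e = d
      · subst he; simpa using hc
      · simp [Function.update_of_ne he]
    refine ⟨fun d => {r | ∃ s ∈ S, s d = r}, ?_, ?_⟩
    · rintro d a ⟨s, hs, rfl⟩ b ⟨t, ht, rfl⟩ c h1 h2
      refine ⟨Function.update s d c, hu s hs t ht d c ?_, by simp⟩
      rw [abs_of_nonpos (by linarith), abs_of_nonpos (by linarith),
        abs_of_nonpos (by linarith)]
      ring
    · ext x
      constructor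
      · intro hx d
        exact ⟨x, hx, rfl⟩
      · intro hx
        have key : ∀ T : Finset D, ∃ y ∈ S, ∀ d ∈ T, y d = x d := by
          intro T
          induction T using Finset.induction_on with
          | empty =>
            obtain ⟨y, hy⟩ := hS
            exact ⟨y, hy, by simp⟩
          | insert a T ha ih =>
            obtain ⟨y, hy, hyT⟩ := ih
            obtain ⟨s, hs, hsa⟩ := hx a
            refine ⟨Function.update y a (x a), hu y hy s hs a _ (by simp [hsa]), ?_⟩
            intro d hd
            by_cases hda : d = a
            · subst hda; simp
            · rw [Function.update_of_ne hda]
              exact hyT d ((Finset.mem_insert.1 hd).resolve_left hda)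
        obtain ⟨y, hy, hyx⟩ := key Finset.univ
        have : y = x := funext fun d => hyx d (Finset.mem_univ d)
        exact this ▸ hy
  · rintro ⟨I, hI, rfl⟩ x hx z hz y hy d
    rw [← Finset.sum_add_distrib] at hy
    have hle : ∀ e ∈ Finset.univ, w e * |x e - z e| ≤
        w e * |x e - y e| + w e * |y e - z e| := by
      intro e _
      rw [← mul_add]
      exact mul_le_mul_of_nonneg_left (abs_sub_le _ _ _) (hw e).le
    have h1 := (Finset.sum_eq_sum_iff_of_le hle).1 hy.symm d (Finset.mem_univ d)
    rw [← mul_add] at h1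
    have h2 := mul_left_cancel₀ (hw d).ne' h1
    rcases le_total (x d) (z d) with hxz | hxz
    · rw [abs_of_nonpos (by linarith : x d - z d ≤ 0)] at h2
      refine hI d _ (hx d) _ (hz d) _ ?_ ?_
      · linarith [le_abs_self (x d - y d), neg_abs_le (y d - z d)]
      · linarith [neg_abs_le (x d - y d), le_abs_self (y d - z d)]
    · rw [abs_of_nonneg (by linarith : 0 ≤ x d - z d)] at h2
      refine hI d _ (hz d) _ (hx d) _ ?_ ?_
      · linarith [le_abs_self (x d - y d), neg_abs_le (y d - z d)]
      · linarith [neg_abs_le (x d - y d), le_abs_self (y d - z d)]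
end

section
/- Let D be a finite nonempty index set, partitioned into a collection Δ of nonempty domains δ ⊆ D, with positive weights w_δ > 0 and w_d > 0, and let d_C(x,y) = Σ_{δ∈Δ} w_δ · √(Σ_{d∈δ} w_d·(x_d − y_d)²). Let C = {x ∈ ℝ^D : ∀d, p⁻_d ≤ x_d ≤ p⁺_d} be a nonempty axis-parallel cuboid and ε ≥ 0. Then the ε-neighborhood C^ε = {x ∈ ℝ^D : inf_{y∈C} d_C(x,y) ≤ ε} is star-shaped under d_C with respect to C: for all p ∈ C, z ∈ C^ε and y ∈ ℝ^D, if d_C(p,y) + d_C(y,z) = d_C(p,z) then y ∈ C^ε. -/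
open Finset

noncomputable def embB {D ι : Type*} [Fintype D] [DecidableEq ι] (bl : D → ι) (wd : D → ℝ) (j : ι)
    (x : D → ℝ) : EuclideanSpace ℝ D :=
  WithLp.toLp 2 (fun d => if bl d = j then Real.sqrt (wd d) * x d else 0)

lemma embB_dist {D ι : Type*} [Fintype D] [DecidableEq ι] (bl : D → ι) (wd : D → ℝ)
    (hwd : ∀ d, 0 < wd d) (j : ι) (x y : D → ℝ) :
    Real.sqrt (∑ d ∈ univ.filter (fun d => bl d = j), wd d * (x d - y d) ^ 2)
      = dist (embB bl wd j x) (embB bl wd j y) := by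
  rw [EuclideanSpace.dist_eq, Finset.sum_filter]
  congr 1
  refine Finset.sum_congr rfl fun d _ => ?_
  by_cases h : bl d = j
  · simp only [embB, h, if_true, Real.dist_eq, sq_abs]
    rw [← mul_sub, mul_pow, Real.sq_sqrt (hwd d).le]
  · simp [embB, h]

lemma clamp_aux {a b c p y z t : ℝ} (ht0 : 0 ≤ t) (ht1 : t ≤ 1) (hy : y = p + t * (z - p))
    (hp : a ≤ p ∧ p ≤ b) (hc : a ≤ c ∧ c ≤ b) :
    (y - max a (min y b)) ^ 2 ≤ (z - c) ^ 2 := by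
  obtain ⟨h1, h2⟩ := hp
  obtain ⟨h3, h4⟩ := hc
  rcases le_or_gt y b with h | h
  · rw [min_eq_left h]
    rcases le_or_gt a y with h' | h'
    · rw [max_eq_right h']; simpa using sq_nonneg (z - c)
    · rw [max_eq_left h'.le]
      have hzp : z ≤ p := by
        by_contra hh
        push Not at hh
        nlinarith
      have : z ≤ y := by nlinarith
      nlinarith
  · rw [min_eq_right h.le, max_eq_right (by linarith)]
    have hzp : p ≤ z := by
      by_contra hh
      push Not at hh
      nlinarith
    have : y ≤ z := by nlinarith
    nlinarith


/-- The ε-neighborhood (under the combined metric d_C) of a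
nonempty axis-parallel cuboid C is star-shaped under d_C with respect to C.
The partition of `D` into nonempty domains is given by the fibers of the
surjective block map `bl : D → ι`. -/
theorem cuboid_eps_neighborhood_star_shaped
    {D ι : Type*} [Fintype D] [Nonempty D] [Fintype ι] [DecidableEq ι]
    (bl : D → ι) (hbl : Function.Surjective bl)
    (wδ : ι → ℝ) (wd : D → ℝ)
    (hwδ : ∀ j, 0 < wδ j) (hwd : ∀ d, 0 < wd d)
    (dC : (D → ℝ) → (D → ℝ) → ℝ)
    (hdC : ∀ x y, dC x y = ∑ j : ι, wδ j *
      Real.sqrt (∑ d ∈ univ.filter (fun d => bl d = j), wd d * (x d - y d) ^ 2))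
    (pm pp : D → ℝ) (C : Set (D → ℝ))
    (hC : C = {x : D → ℝ | ∀ d, pm d ≤ x d ∧ x d ≤ pp d})
    (hCne : C.Nonempty)
    (ε : ℝ) (hε : 0 ≤ ε)
    (Cε : Set (D → ℝ))
    (hCε : Cε = {x : D → ℝ | sInf ((fun y => dC x y) '' C) ≤ ε}) :
    ∀ p ∈ C, ∀ z ∈ Cε, ∀ y : D → ℝ,
      dC p y + dC y z = dC p z → y ∈ Cε := by
  subst hC hCε
  intro p hp z hz y h
  simp only [Set.mem_setOf_eq] at hp hz ⊢
  have key : ∀ d, ∃ t : ℝ, 0 ≤ t ∧ t ≤ 1 ∧ y d = p d + t * (z d - p d) := by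
    intro d
    simp only [hdC, embB_dist bl wd hwd] at h
    rw [← Finset.sum_add_distrib] at h
    have h2 := (Finset.sum_eq_sum_iff_of_le (s := univ)
      (f := fun j => wδ j * dist (embB bl wd j p) (embB bl wd j z))
      (g := fun j => wδ j * dist (embB bl wd j p) (embB bl wd j y)
        + wδ j * dist (embB bl wd j y) (embB bl wd j z)) (by
        intro j _
        rw [← mul_add]
        exact mul_le_mul_of_nonneg_left (dist_triangle _ _ _) (hwδ j).le)).1 h.symm
        (bl d) (mem_univ _)
    simp only [← mul_add] at h2
    have h3 := mul_left_cancel₀ (hwδ (bl d)).ne' h2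
    obtain ⟨t, ⟨ht0, ht1⟩, ht⟩ := dist_add_dist_eq_iff.1 h3.symm
    refine ⟨t, ht0, ht1, ?_⟩
    have h4 := congrArg (fun v : EuclideanSpace ℝ D => v d) ht
    simp [embB, AffineMap.lineMap_apply] at h4
    have hs := Real.sqrt_pos.2 (hwd d)
    apply mul_left_cancel₀ hs.ne'
    linarith
  have hnn : ∀ x y, 0 ≤ dC x y := by
    intro x y
    rw [hdC]
    exact Finset.sum_nonneg fun j _ => mul_nonneg (hwδ j).le (Real.sqrt_nonneg _)
  refine le_trans (le_csInf (hCne.image _) ?_) hz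
  rintro _ ⟨c, hc, rfl⟩
  refine le_trans (csInf_le ⟨0, ?_⟩
    ⟨fun d => max (pm d) (min (y d) (pp d)), ?_, rfl⟩) ?_
  · rintro _ ⟨x, _, rfl⟩
    exact hnn _ _
  · intro d
    exact ⟨le_max_left _ _, max_le ((hp d).1.trans (hp d).2) (min_le_right _ _)⟩
  · simp only [hdC]
    refine Finset.sum_le_sum fun j _ => mul_le_mul_of_nonneg_left (Real.sqrt_le_sqrt ?_) (hwδ j).le
    refine Finset.sum_le_sum fun d _ => mul_le_mul_of_nonneg_left ?_ (hwd d).le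
    obtain ⟨t, h0, h1, ht⟩ := key d
    exact clamp_aux h0 h1 ht (hp d) (hc d)
end

section
/- Let D be a finite nonempty index set, partitioned into a collection Δ of nonempty domains δ ⊆ D, with positive weights w_δ > 0 and w_d > 0, and let d_C(x,y) = Σ_{δ∈Δ} w_δ · √(Σ_{d∈δ} w_d·(x_d − y_d)²). Let C₁, …, C_m be nonempty axis-parallel cuboids in ℝ^D (each of the form {x : ∀d, p⁻_d ≤ x_d ≤ p⁺_d} with finite p⁻ ≤ p⁺) such that P := ⋂_{i=1}^m C_i is nonempty, and let S := ⋃_{i=1}^m C_i. Fix μ₀ ∈ (0,1] and c > 0 and define μ(x) = μ₀ · max_{y∈S} e^{−c·d_C(x,y)}. Then for every α ∈ (0,1], the α-cut {x ∈ ℝ^D : μ(x) ≥ α} is either empty or star-shaped under d_C with respect to P. -/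
open Finset

noncomputable def blkV {D ι : Type*} [DecidableEq ι] (bl : D → ι) (wd : D → ℝ) (j : ι)
    (x : D → ℝ) : EuclideanSpace ℝ D :=
  WithLp.toLp 2 (fun d => if bl d = j then Real.sqrt (wd d) * x d else 0)

lemma blkV_dist {D ι : Type*} [Fintype D] [DecidableEq ι] (bl : D → ι) (wd : D → ℝ)
    (hwd : ∀ d, 0 < wd d) (j : ι) (x y : D → ℝ) :
    dist (blkV bl wd j x) (blkV bl wd j y) =
      Real.sqrt (∑ d ∈ univ.filter (fun d => bl d = j), wd d * (x d - y d) ^ 2) := by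
  rw [EuclideanSpace.dist_eq, Finset.sum_filter]
  congr 1
  refine Finset.sum_congr rfl fun d _ => ?_
  simp only [blkV, Real.dist_eq, sq_abs]
  split_ifs
  · rw [← mul_sub, mul_pow, Real.sq_sqrt (hwd d).le]
  · simp

/-- A fuzzy simple star-shaped set is star-shaped: given cuboids
C₁,…,C_m with nonempty intersection P and union S, the membership function
μ(x) = μ₀ · max_{y∈S} e^{−c·d_C(x,y)} has all its α-cuts (for α ∈ (0,1]) either
empty or star-shaped under d_C with respect to P.  The partition of `D` into
nonempty domains is given by the fibers of the surjective block map
`bl : D → ι`. -/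
theorem fuzzy_simple_star_shaped_set_is_star_shaped
    {D ι : Type*} [Fintype D] [Nonempty D] [Fintype ι] [DecidableEq ι]
    (bl : D → ι) (hbl : Function.Surjective bl)
    (wδ : ι → ℝ) (wd : D → ℝ)
    (hwδ : ∀ j, 0 < wδ j) (hwd : ∀ d, 0 < wd d)
    (dC : (D → ℝ) → (D → ℝ) → ℝ)
    (hdC : ∀ x y, dC x y = ∑ j : ι, wδ j *
      Real.sqrt (∑ d ∈ univ.filter (fun d => bl d = j), wd d * (x d - y d) ^ 2))
    {m : ℕ} (pm pp : Fin m → D → ℝ) (hple : ∀ i d, pm i d ≤ pp i d)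
    (C : Fin m → Set (D → ℝ))
    (hCdef : ∀ i, C i = {x : D → ℝ | ∀ d, pm i d ≤ x d ∧ x d ≤ pp i d})
    (P : Set (D → ℝ)) (hP : P = ⋂ i, C i) (hPne : P.Nonempty)
    (S : Set (D → ℝ)) (hS : S = ⋃ i, C i)
    (μ₀ c : ℝ) (hμ₀ : μ₀ ∈ Set.Ioc (0 : ℝ) 1) (hc : 0 < c)
    (μ : (D → ℝ) → ℝ)
    (hμ : ∀ x, μ x = μ₀ * sSup ((fun y => Real.exp (-c * dC x y)) '' S)) :
    ∀ α ∈ Set.Ioc (0 : ℝ) 1,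
      {x : D → ℝ | α ≤ μ x} = ∅ ∨
      (P ⊆ {x : D → ℝ | α ≤ μ x} ∧
        ∀ p ∈ P, ∀ z ∈ {x : D → ℝ | α ≤ μ x}, ∀ y : D → ℝ,
          dC p y + dC y z = dC p z → α ≤ μ y) := by
  intro α hα
  have hd : ∀ x y, dC x y = ∑ j : ι, wδ j * dist (blkV bl wd j x) (blkV bl wd j y) := by
    intro x y
    rw [hdC]
    exact Finset.sum_congr rfl fun j _ => by rw [blkV_dist bl wd hwd]
  have hd0 : ∀ x y, 0 ≤ dC x y := by
    intro x y
    rw [hd]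
    exact Finset.sum_nonneg fun j _ => mul_nonneg (hwδ j).le dist_nonneg
  have hself : ∀ x, dC x x = 0 := by
    intro x
    rw [hd]
    simp
  have hle1 : ∀ x y, Real.exp (-c * dC x y) ≤ 1 := by
    intro x y
    rw [Real.exp_le_one_iff]
    nlinarith [mul_nonneg hc.le (hd0 x y)]
  have hbdd : ∀ x, BddAbove ((fun y => Real.exp (-c * dC x y)) '' S) := by
    intro x
    refine ⟨1, ?_⟩
    rintro _ ⟨y, _, rfl⟩
    exact hle1 x y
  by_cases hSne : S.Nonempty
  swap
  · left
    rw [Set.not_nonempty_iff_eq_empty] at hSne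
    ext x
    simp only [Set.mem_setOf_eq, Set.mem_empty_iff_false, iff_false, not_le]
    rw [hμ, hSne]
    simpa using hα.1
  have hPC : ∀ p ∈ P, ∀ i, p ∈ C i := by
    intro p hp i
    rw [hP] at hp
    exact Set.mem_iInter.1 hp i
  have hPS : P ⊆ S := by
    intro p hp
    obtain ⟨s, hs⟩ := hSne
    rw [hS] at hs ⊢
    obtain ⟨i, _⟩ := Set.mem_iUnion.1 hs
    exact Set.mem_iUnion.2 ⟨i, hPC p hp i⟩
  rcases Set.eq_empty_or_nonempty {x : D → ℝ | α ≤ μ x} with h | ⟨z0, hz0⟩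
  · exact Or.inl h
  right
  constructor
  · intro p hp
    refine le_trans (show α ≤ μ z0 from hz0) ?_
    rw [hμ, hμ]
    refine mul_le_mul_of_nonneg_left ?_ hμ₀.1.le
    refine csSup_le (hSne.image _) ?_
    rintro _ ⟨s, _, rfl⟩
    refine le_trans (hle1 z0 s) ?_
    refine le_csSup (hbdd p) ⟨p, hPS hp, ?_⟩
    simp [hself]
  · intro p hp z hz y hy
    refine le_trans (show α ≤ μ z from hz) ?_
    rw [hμ, hμ]
    refine mul_le_mul_of_nonneg_left ?_ hμ₀.1.le
    refine csSup_le (hSne.image _) ?_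
    rintro _ ⟨s, hs, rfl⟩
    have hw : ∀ j, Wbtw ℝ (blkV bl wd j p) (blkV bl wd j y) (blkV bl wd j z) := by
      have h0 : ∑ j : ι, wδ j * (dist (blkV bl wd j p) (blkV bl wd j y)
          + dist (blkV bl wd j y) (blkV bl wd j z)
          - dist (blkV bl wd j p) (blkV bl wd j z)) = 0 := by
        simp only [mul_sub, mul_add, Finset.sum_sub_distrib, Finset.sum_add_distrib, ← hd]
        linarith
      rw [Finset.sum_eq_zero_iff_of_nonneg (fun j _ => mul_nonneg (hwδ j).le
        (sub_nonneg.2 (dist_triangle _ _ _)))] at h0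
      intro j
      rw [← dist_add_dist_eq_iff]
      have h1 := h0 j (Finset.mem_univ j)
      rcases mul_eq_zero.1 h1 with h | h
      · exact absurd h (hwδ j).ne'
      · linarith
    choose t ht hty using hw
    have hyd : ∀ d, y d = p d + t (bl d) * (z d - p d) := by
      intro d
      have h := congrArg (fun v : EuclideanSpace ℝ D => v d) (hty (bl d))
      simp [blkV, AffineMap.lineMap_apply] at h
      have hs := Real.sqrt_pos.2 (hwd d)
      apply mul_left_cancel₀ hs.ne'
      linarith
    rw [hS] at hs
    obtain ⟨i, hi⟩ := Set.mem_iUnion.1 hs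
    have hpi := hPC p hp i
    have hs' : (fun d => p d + t (bl d) * (s d - p d)) ∈ S := by
      rw [hS]
      refine Set.mem_iUnion.2 ⟨i, ?_⟩
      rw [hCdef] at hi hpi ⊢
      intro d
      obtain ⟨h1, h2⟩ := hi d
      obtain ⟨h3, h4⟩ := hpi d
      obtain ⟨h5, h6⟩ := ht (bl d)
      constructor
      · nlinarith [mul_nonneg h5 (sub_nonneg.2 h1), mul_nonneg (sub_nonneg.2 h6) (sub_nonneg.2 h3)]
      · nlinarith [mul_nonneg h5 (sub_nonneg.2 h2), mul_nonneg (sub_nonneg.2 h6) (sub_nonneg.2 h4)]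
    refine le_trans ?_ (le_csSup (hbdd y) ⟨_, hs', rfl⟩)
    refine Real.exp_le_exp.2 ?_
    have key : dC y (fun d => p d + t (bl d) * (s d - p d)) ≤ dC z s := by
      rw [hdC, hdC]
      refine Finset.sum_le_sum fun j _ => mul_le_mul_of_nonneg_left ?_ (hwδ j).le
      refine Real.sqrt_le_sqrt (Finset.sum_le_sum fun d _ => ?_)
      refine mul_le_mul_of_nonneg_left ?_ (hwd d).le
      rw [hyd d]
      obtain ⟨h5, h6⟩ := ht (bl d)
      have e : (p d + t (bl d) * (z d - p d) - (p d + t (bl d) * (s d - p d))) ^ 2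
          = t (bl d) ^ 2 * (z d - s d) ^ 2 := by ring
      rw [e]
      exact mul_le_of_le_one_left (sq_nonneg _) (pow_le_one₀ h5 h6)
    nlinarith [mul_le_mul_of_nonneg_left key hc.le]
end

section
/- Let D be a finite nonempty index set with n = |D|, partitioned into a collection Δ of nonempty domains δ ⊆ D with n_δ = |δ|, and let w_δ > 0 and w_d > 0 be positive weights. Let d_C(x,y) = Σ_{δ∈Δ} w_δ · √(Σ_{d∈δ} w_d·(x_d − y_d)²) and for d ∈ D write δ(d) for the unique domain containing d. Then for every r > 0, the n-dimensional Lebesgue measure of the ball {x ∈ ℝ^D : d_C(x,0) ≤ r} equals (1 / ∏_{d∈D} (w_{δ(d)} · √(w_d))) · (rⁿ / n!) · ∏_{δ∈Δ} ( n_δ! · π^{n_δ/2} / Γ(n_δ/2 + 1) ). -/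
open Finset

open MeasureTheory in
theorem aux_mp {D ι : Type*} [Fintype D] [Fintype ι] [DecidableEq ι] (bl : D → ι) :
    MeasurePreserving (fun (y : (j : ι) → EuclideanSpace ℝ {d // bl d = j}) (d : D) =>
      y (bl d) ⟨d, rfl⟩) volume volume := by
  have hm : Measurable (fun (y : (j : ι) → EuclideanSpace ℝ {d // bl d = j}) (d : D) =>
      y (bl d) ⟨d, rfl⟩) := by
    apply Continuous.measurable
    fun_prop
  refine ⟨hm, ?_⟩
  refine (Measure.pi_eq fun s hs => ?_).symm
  rw [Measure.map_apply hm (MeasurableSet.univ_pi hs)]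
  have : ((fun (y : (j : ι) → EuclideanSpace ℝ {d // bl d = j}) (d : D) =>
      y (bl d) ⟨d, rfl⟩) ⁻¹' Set.pi Set.univ s) =
      Set.pi Set.univ (fun j => (@WithLp.ofLp 2 ({d // bl d = j} → ℝ)) ⁻¹'
        Set.pi Set.univ (fun d => s d.1)) := by
    ext y
    simp only [Set.mem_preimage, Set.mem_pi, Set.mem_univ, true_implies]
    constructor
    · rintro h j ⟨d, rfl⟩
      exact h d
    · intro h d
      exact h (bl d) ⟨d, rfl⟩
  rw [this, volume_pi_pi]
  have h2 : ∀ j, volume ((@WithLp.ofLp 2 ({d // bl d = j} → ℝ)) ⁻¹'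
        Set.pi Set.univ (fun d => s d.1)) = ∏ d : {d // bl d = j}, volume (s d.1) := by
    intro j
    rw [(PiLp.volume_preserving_ofLp {d // bl d = j}).measure_preimage
      (MeasurableSet.univ_pi fun d => hs d.1).nullMeasurableSet, volume_pi_pi]
  simp_rw [h2]
  exact Fintype.prod_fiberwise bl (fun d => volume (s d))

open MeasureTheory in
theorem aux_integral (κ : Type*) [Fintype κ] [Nonempty κ] :
    ∫ x : EuclideanSpace ℝ κ, Real.exp (-‖x‖) =
      (Nat.factorial (Fintype.card κ) : ℝ) * Real.pi ^ ((Fintype.card κ : ℝ) / 2) /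
        Real.Gamma ((Fintype.card κ : ℝ) / 2 + 1) := by
  have h1 := EuclideanSpace.volume_ball κ 0 1
  rw [measure_unitBall_eq_integral_div_gamma volume one_pos] at h1
  simp only [Real.rpow_one, div_one, finrank_euclideanSpace, Real.Gamma_nat_eq_factorial,
    ENNReal.ofReal_one, one_pow, one_mul] at h1
  have hG : 0 < Real.Gamma ((Fintype.card κ : ℝ) / 2 + 1) :=
    Real.Gamma_pos_of_pos (by positivity)
  rw [ENNReal.ofReal_eq_ofReal_iff
    (div_nonneg (integral_nonneg fun x => (Real.exp_pos _).le) (by positivity))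
    (by positivity)] at h1
  rw [div_eq_iff (by positivity)] at h1
  rw [h1, Real.sqrt_eq_rpow, ← Real.rpow_natCast, ← Real.rpow_mul Real.pi_pos.le]
  ring_nf

open MeasureTheory Pointwise in
theorem aux_ball {ι : Type*} [Fintype ι] [Nonempty ι] (κ : ι → Type*) [∀ j, Fintype (κ j)]
    [∀ j, Nonempty (κ j)] (r : ℝ) (hr : 0 < r) :
    volume {y : (j : ι) → EuclideanSpace ℝ (κ j) | ∑ j, ‖y j‖ ≤ r} =
      ENNReal.ofReal ((r ^ (∑ j, Fintype.card (κ j)) /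
        (Nat.factorial (∑ j, Fintype.card (κ j)) : ℝ)) *
        ∏ j, ((Nat.factorial (Fintype.card (κ j)) : ℝ) * Real.pi ^ ((Fintype.card (κ j) : ℝ) / 2) /
        Real.Gamma ((Fintype.card (κ j) : ℝ) / 2 + 1))) := by
  have h1 : ∑ j, ‖(0 : (j : ι) → EuclideanSpace ℝ (κ j)) j‖ = 0 := by simp
  have h2 : ∀ x : (j : ι) → EuclideanSpace ℝ (κ j), ∑ j, ‖(-x) j‖ = ∑ j, ‖x j‖ := by simp
  have h3 : ∀ x y : (j : ι) → EuclideanSpace ℝ (κ j),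
      ∑ j, ‖(x + y) j‖ ≤ ∑ j, ‖x j‖ + ∑ j, ‖y j‖ := by
    intro x y
    rw [← Finset.sum_add_distrib]
    exact Finset.sum_le_sum fun j _ => norm_add_le _ _
  have h4 : ∀ {x : (j : ι) → EuclideanSpace ℝ (κ j)}, ∑ j, ‖x j‖ = 0 → x = 0 := by
    intro x hx
    rw [Finset.sum_eq_zero_iff_of_nonneg (fun _ _ => norm_nonneg _)] at hx
    ext1 j
    exact norm_eq_zero.mp (hx j (Finset.mem_univ _))
  have h5 : ∀ (r : ℝ) (x : (j : ι) → EuclideanSpace ℝ (κ j)),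
      ∑ j, ‖(r • x) j‖ ≤ |r| * ∑ j, ‖x j‖ := by
    intro r x
    simp [norm_smul, Finset.mul_sum]
  have hfr : Module.finrank ℝ ((j : ι) → EuclideanSpace ℝ (κ j)) = ∑ j, Fintype.card (κ j) := by
    rw [Module.finrank_pi_fintype]; simp
  have hnt : Nontrivial ((j : ι) → EuclideanSpace ℝ (κ j)) := by
    apply Module.nontrivial_of_finrank_pos (R := ℝ)
    rw [hfr]
    exact Finset.sum_pos (fun j _ => Fintype.card_pos) Finset.univ_nonempty
  have hset : {y : (j : ι) → EuclideanSpace ℝ (κ j) | ∑ j, ‖y j‖ ≤ r} =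
      r • {y : (j : ι) → EuclideanSpace ℝ (κ j) | ∑ j, ‖y j‖ ≤ 1} := by
    ext y
    rw [Set.mem_smul_set_iff_inv_smul_mem₀ hr.ne']
    simp only [Set.mem_ofPred_eq, Pi.smul_apply, norm_smul, ← Finset.mul_sum, norm_inv,
      Real.norm_eq_abs, abs_of_pos hr]
    rw [inv_mul_le_iff₀ hr, mul_one]
  rw [hset, Measure.addHaar_smul_of_nonneg _ hr.le,
    measure_le_eq_lt volume (g := fun y : (j : ι) → EuclideanSpace ℝ (κ j) => ∑ j, ‖y j‖)
      h1 h2 h3 h4 h5 1,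
    measure_lt_one_eq_integral_div_gamma volume
      (g := fun y : (j : ι) → EuclideanSpace ℝ (κ j) => ∑ j, ‖y j‖)
      h1 h2 h3 h4 h5 one_pos, hfr, ← ENNReal.ofReal_mul (by positivity)]
  simp only [Real.rpow_one, div_one, Real.Gamma_nat_eq_factorial, ← Finset.sum_neg_distrib,
    Real.exp_sum]
  rw [integral_fintype_prod_volume_eq_prod
    (fun j (x : EuclideanSpace ℝ (κ j)) => Real.exp (-‖x‖))]
  simp_rw [aux_integral]
  congr 1
  ring

/-- The Lebesgue volume of a ball of radius r around the origin
under the combined metric d_C equals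
(1/∏_d w_{δ(d)}·√w_d) · (rⁿ/n!) · ∏_{δ∈Δ} (n_δ!·π^{n_δ/2}/Γ(n_δ/2+1)).
The partition of `D` into nonempty domains is given by the fibers of the
surjective block map `bl : D → ι`; `δ(d)` is `bl d` and
`n_δ` is the cardinality of the fiber. -/
theorem volume_ball_combined_metric
    {D ι : Type*} [Fintype D] [Nonempty D] [Fintype ι] [DecidableEq ι]
    (bl : D → ι) (hbl : Function.Surjective bl)
    (wδ : ι → ℝ) (wd : D → ℝ)
    (hwδ : ∀ j, 0 < wδ j) (hwd : ∀ d, 0 < wd d)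
    (dC : (D → ℝ) → (D → ℝ) → ℝ)
    (hdC : ∀ x y, dC x y = ∑ j : ι, wδ j *
      Real.sqrt (∑ d ∈ univ.filter (fun d => bl d = j), wd d * (x d - y d) ^ 2))
    (n : ℕ) (hn : n = Fintype.card D)
    (nδ : ι → ℕ) (hnδ : ∀ j, nδ j = (univ.filter (fun d => bl d = j)).card)
    (r : ℝ) (hr : 0 < r) :
    MeasureTheory.volume {x : D → ℝ | dC x 0 ≤ r} =
      ENNReal.ofReal
        ((1 / ∏ d : D, (wδ (bl d) * Real.sqrt (wd d))) *
          (r ^ n / (Nat.factorial n : ℝ)) *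
          ∏ j : ι, ((Nat.factorial (nδ j) : ℝ) *
            Real.pi ^ ((nδ j : ℝ) / 2) / Real.Gamma ((nδ j : ℝ) / 2 + 1))) := by
  classical
  have hbn : ∀ j, Nonempty {d // bl d = j} := fun j => by
    obtain ⟨d, hd⟩ := hbl j; exact ⟨⟨d, hd⟩⟩
  have hι : Nonempty ι := Nonempty.map bl inferInstance
  have hcard : ∀ j, nδ j = Fintype.card {d // bl d = j} := fun j => by
    rw [hnδ, Fintype.card_subtype]
  have hsum : ∑ j, Fintype.card {d // bl d = j} = n := by
    rw [hn, ← Fintype.card_sigma, Fintype.card_congr (Equiv.sigmaFiberEquiv bl)]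
  set c : D → ℝ := fun d => wδ (bl d) * Real.sqrt (wd d) with hc
  have hcpos : ∀ d, 0 < c d := fun d => mul_pos (hwδ _) (Real.sqrt_pos.2 (hwd d))
  set L := Matrix.toLin' (Matrix.diagonal c) with hL
  have hdet : LinearMap.det L = ∏ d, c d := by
    rw [hL, LinearMap.det_toLin', Matrix.det_diagonal]
  have hP : 0 < ∏ d, c d := Finset.prod_pos fun d _ => hcpos d
  set S : Set (D → ℝ) := {x | ∑ j, Real.sqrt (∑ d : {d // bl d = j}, (x d.1) ^ 2) ≤ r} with hS
  have hSm : MeasurableSet S := by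
    apply IsClosed.measurableSet
    apply isClosed_le <;> fun_prop
  have hset : {x : D → ℝ | dC x 0 ≤ r} = L ⁻¹' S := by
    ext x
    simp only [hS, Set.mem_ofPred_eq, Set.mem_preimage, hdC]
    have : ∀ j, wδ j * Real.sqrt (∑ d ∈ univ.filter (fun d => bl d = j),
        wd d * (x d - (0 : D → ℝ) d) ^ 2) =
        Real.sqrt (∑ d : {d // bl d = j}, (L x d.1) ^ 2) := by
      intro j
      rw [← Real.sqrt_sq (hwδ j).le, ← Real.sqrt_mul (sq_nonneg _)]
      congr 1
      rw [Finset.mul_sum, Finset.sum_subtype (p := fun d => bl d = j) _ (by simp)]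
      refine Finset.sum_congr rfl ?_
      rintro ⟨d, rfl⟩ -
      simp only [hL, Matrix.toLin'_apply, Matrix.mulVec_diagonal, hc, Pi.zero_apply, sub_zero]
      rw [mul_pow, mul_pow, Real.sq_sqrt (hwd d).le, mul_assoc]
    simp_rw [this]
  rw [hset, MeasureTheory.Measure.addHaar_preimage_linearMap _ (by rw [hdet]; exact hP.ne'), hdet,
    ← (aux_mp bl).measure_preimage hSm.nullMeasurableSet]
  have hpre : ((fun (y : (j : ι) → EuclideanSpace ℝ {d // bl d = j}) (d : D) =>
      y (bl d) ⟨d, rfl⟩) ⁻¹' S) = {y | ∑ j, ‖y j‖ ≤ r} := by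
    ext y
    simp only [hS, Set.mem_ofPred_eq, Set.mem_preimage]
    have : ∀ j, Real.sqrt (∑ d : {d // bl d = j}, (y (bl d.1) ⟨d.1, rfl⟩) ^ 2) = ‖y j‖ := by
      intro j
      rw [EuclideanSpace.norm_eq]
      congr 1
      refine Finset.sum_congr rfl ?_
      rintro ⟨d, rfl⟩ -
      simp
    simp_rw [this]
  rw [hpre, aux_ball _ r hr, hsum, ← ENNReal.ofReal_mul (abs_nonneg _),
    abs_of_pos (inv_pos.2 hP)]
  simp_rw [hcard]
  congr 1
  rw [one_div, mul_assoc]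
end

section
/- Let D be a finite nonempty index set partitioned into a collection Δ of nonempty domains δ ⊆ D, with positive weights w_δ > 0 and w_d > 0, and let d_C(x,y) = Σ_{δ∈Δ} w_δ · √(Σ_{d∈δ} w_d·(x_d − y_d)²); for d ∈ D write δ(d) for the unique domain containing d. Let C = {x ∈ ℝ^D : ∀d, p⁻_d ≤ x_d ≤ p⁺_d} be a nonempty axis-parallel cuboid with side lengths b_d = p⁺_d − p⁻_d. Then for every ε > 0, the Lebesgue measure of the ε-neighborhood {x ∈ ℝ^D : inf_{y∈C} d_C(x,y) ≤ ε} equals Σ_{T⊆D} ( ∏_{d ∈ D∖T} b_d ) · (1 / ∏_{d∈T} (w_{δ(d)} · √(w_d))) · (ε^{|T|} / |T|!) · ∏_{δ∈Δ, δ∩T ≠ ∅} ( |δ∩T|! · π^{|δ∩T|/2} / Γ(|δ∩T|/2 + 1) ), where the sum runs over all subsets T of D (with the empty product equal to 1). -/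
open Finset

open MeasureTheory in
lemma aux_ball_s15 (F : Type*) [Fintype F] :
    ∫ v : F → ℝ, Real.exp (-‖WithLp.toLp 2 v‖) =
      (Nat.factorial (Fintype.card F) : ℝ) * Real.pi ^ ((Fintype.card F : ℝ) / 2) /
        Real.Gamma ((Fintype.card F : ℝ) / 2 + 1) := by
  have h0 : ∫ v : F → ℝ, Real.exp (-‖WithLp.toLp 2 v‖) =
      ∫ v : EuclideanSpace ℝ F, Real.exp (-‖v‖) := by
    rw [← (PiLp.volume_preserving_toLp F).integral_comp
      (MeasurableEquiv.toLp 2 (F → ℝ)).measurableEmbedding]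
  rw [h0]
  rcases isEmpty_or_nonempty F with hF | hF
  · have : ∀ v : EuclideanSpace ℝ F, v = 0 := fun v => Subsingleton.elim _ _
    rw [← h0]
    have h2 : ∀ v : F → ℝ, WithLp.toLp 2 v = 0 := fun v => this _
    rw [volume_pi, Measure.pi_of_empty]
    simp [h2]
  · have h1 := measure_unitBall_eq_integral_div_gamma (E := EuclideanSpace ℝ F) volume (p := 1) one_pos
    rw [EuclideanSpace.volume_ball] at h1
    simp only [ENNReal.ofReal_one, one_pow, one_mul, Real.rpow_one, finrank_euclideanSpace, div_one,
      Real.Gamma_nat_eq_factorial] at h1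
    have hG : 0 < Real.Gamma ((Fintype.card F : ℝ) / 2 + 1) := Real.Gamma_pos_of_pos (by positivity)
    rw [ENNReal.ofReal_eq_ofReal_iff (by positivity)
      (div_nonneg (integral_nonneg fun _ => (Real.exp_pos _).le) (by positivity))] at h1
    rw [eq_div_iff (by positivity)] at h1
    rw [← h1, Real.sqrt_eq_rpow, ← Real.rpow_natCast, ← Real.rpow_mul Real.pi_pos.le]
    rw [show (1 / 2 * (Fintype.card F : ℝ)) = (Fintype.card F : ℝ) / 2 by ring]
    ring

open MeasureTheory in
lemma aux_curry {E ι : Type*} [Fintype E] [Fintype ι] [DecidableEq ι] (bl : E → ι) :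
    MeasurePreserving (fun (y : ∀ j, {d // bl d = j} → ℝ) (d : E) => y (bl d) ⟨d, rfl⟩)
      volume volume := by
  have hm : Measurable (fun (y : ∀ j, {d // bl d = j} → ℝ) (d : E) => y (bl d) ⟨d, rfl⟩) := by
    fun_prop
  refine ⟨hm, ?_⟩
  symm
  refine Measure.pi_eq fun s hs => ?_
  rw [Measure.map_apply hm (.univ_pi hs)]
  have : (fun (y : ∀ j, {d // bl d = j} → ℝ) (d : E) => y (bl d) ⟨d, rfl⟩) ⁻¹' (Set.univ.pi s)
      = Set.univ.pi fun j => Set.univ.pi fun d : {d // bl d = j} => s d := by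
    ext y
    simp only [Set.mem_preimage, Set.mem_univ_pi]
    constructor
    · rintro h j ⟨d, rfl⟩
      exact h d
    · intro h d
      exact h (bl d) ⟨d, rfl⟩
  rw [this, volume_pi_pi]
  simp_rw [volume_pi_pi]
  exact Fintype.prod_fiberwise bl fun d => volume (s d)

/-- block norm -/
noncomputable def blN {E ι : Type*} [Fintype E] [Fintype ι] [DecidableEq ι] (bl : E → ι)
    (v : E → ℝ) : ℝ := ∑ j, ‖WithLp.toLp 2 (fun d : {d // bl d = j} => v d)‖

open MeasureTheory in
lemma aux_unit {E ι : Type*} [Fintype E] [Fintype ι] [DecidableEq ι] (bl : E → ι) :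
    volume {v : E → ℝ | blN bl v ≤ 1} = ENNReal.ofReal
      ((1 / (Nat.factorial (Fintype.card E) : ℝ)) * ∏ j,
        ((Nat.factorial (Fintype.card {d // bl d = j}) : ℝ) *
          Real.pi ^ ((Fintype.card {d // bl d = j} : ℝ) / 2) /
        Real.Gamma ((Fintype.card {d // bl d = j} : ℝ) / 2 + 1))) := by
  have h1 : blN bl (0 : E → ℝ) = 0 := by
    unfold blN
    refine Finset.sum_eq_zero fun j _ => ?_
    rw [norm_eq_zero]; rfl
  have h2 : ∀ x : E → ℝ, blN bl (-x) = blN bl x := by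
    intro x
    unfold blN
    refine Finset.sum_congr rfl fun j _ => ?_
    rw [← norm_neg]; congr 1; ext d; simp
  have h3 : ∀ x y : E → ℝ, blN bl (x + y) ≤ blN bl x + blN bl y := by
    intro x y
    unfold blN
    rw [← Finset.sum_add_distrib]
    refine Finset.sum_le_sum fun j _ => ?_
    refine le_trans (le_of_eq ?_) (norm_add_le _ _)
    rfl
  have h4 : ∀ {x : E → ℝ}, blN bl x = 0 → x = 0 := by
    intro x hx
    unfold blN at hx
    rw [Finset.sum_eq_zero_iff_of_nonneg (fun _ _ => norm_nonneg _)] at hx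
    ext d
    have := hx (bl d) (mem_univ _)
    rw [norm_eq_zero] at this
    exact congrArg (fun z : EuclideanSpace ℝ {d' // bl d' = bl d} => z ⟨d, rfl⟩) this
  have h5 : ∀ (r : ℝ) (x : E → ℝ), blN bl (r • x) ≤ |r| * blN bl x := by
    intro r x
    unfold blN
    rw [Finset.mul_sum]
    refine Finset.sum_le_sum fun j _ => ?_
    rw [← Real.norm_eq_abs, ← norm_smul]
    rfl
  have hI : ∫ v : E → ℝ, Real.exp (-(blN bl v) ^ (1:ℝ)) = ∏ j,
        ((Nat.factorial (Fintype.card {d // bl d = j}) : ℝ) *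
          Real.pi ^ ((Fintype.card {d // bl d = j} : ℝ) / 2) /
        Real.Gamma ((Fintype.card {d // bl d = j} : ℝ) / 2 + 1)) := by
    have hc : Continuous fun v : E → ℝ => Real.exp (-(blN bl v) ^ (1:ℝ)) := by
      simp only [Real.rpow_one]
      unfold blN
      refine Real.continuous_exp.comp (Continuous.neg ?_)
      refine continuous_finsetSum _ fun j _ => Continuous.norm ?_
      exact (PiLp.continuous_toLp 2 _).comp (by fun_prop)
    rw [← (aux_curry bl).map_eq, integral_map (aux_curry bl).measurable.aemeasurable
      hc.aestronglyMeasurable]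
    simp_rw [← aux_ball_s15]
    rw [← integral_fintype_prod_volume_eq_prod
      (f := fun j (y : {d // bl d = j} → ℝ) => Real.exp (-‖WithLp.toLp 2 y‖))]
    congr 1
    ext y
    rw [← Real.exp_sum, Real.rpow_one, blN, Finset.sum_neg_distrib]
    congr 2
    refine Finset.sum_congr rfl fun j _ => ?_
    congr 2
    ext ⟨d, rfl⟩
    rfl
  have hlt := measure_lt_one_eq_integral_div_gamma (volume : Measure (E → ℝ)) h1 h2 h3 h4 h5
    (p := 1) one_pos
  have hle : volume {v : E → ℝ | blN bl v ≤ 1} = volume {v : E → ℝ | blN bl v < 1} := by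
    rcases isEmpty_or_nonempty E with hE | hE
    · have : ∀ v : E → ℝ, blN bl v = 0 := fun v => by rw [Subsingleton.elim v 0, h1]
      simp [this]
    · exact measure_le_eq_lt (volume : Measure (E → ℝ)) h1 h2 h3 h4 h5 1
  rw [hle, hlt, hI]
  congr 1
  simp only [div_one, Module.finrank_fintype_fun_eq_card, Real.Gamma_nat_eq_factorial]
  ring

open MeasureTheory in
lemma aux_scaled {E ι : Type*} [Fintype E] [DecidableEq E] [Fintype ι] [DecidableEq ι] (bl : E → ι)
    (wδ : ι → ℝ) (wd : E → ℝ)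
    (hwδ : ∀ j, 0 < wδ j) (hwd : ∀ d, 0 < wd d) (ε : ℝ) (hε : 0 < ε) :
    volume {v : E → ℝ | ∑ j, wδ j *
      Real.sqrt (∑ d ∈ univ.filter (fun d => bl d = j), wd d * (v d) ^ 2) ≤ ε} = ENNReal.ofReal
      ((1 / ∏ d, (wδ (bl d) * Real.sqrt (wd d))) * (ε ^ Fintype.card E /
        (Nat.factorial (Fintype.card E) : ℝ)) * ∏ j,
        ((Nat.factorial (Fintype.card {d // bl d = j}) : ℝ) *
          Real.pi ^ ((Fintype.card {d // bl d = j} : ℝ) / 2) /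
        Real.Gamma ((Fintype.card {d // bl d = j} : ℝ) / 2 + 1))) := by
  set c : E → ℝ := fun d => wδ (bl d) * Real.sqrt (wd d) / ε with hc
  have hcpos : ∀ d, 0 < c d := fun d => by
    have := hwδ (bl d); have := Real.sqrt_pos.2 (hwd d); positivity
  have hset : {v : E → ℝ | ∑ j, wδ j *
      Real.sqrt (∑ d ∈ univ.filter (fun d => bl d = j), wd d * (v d) ^ 2) ≤ ε} =
      (Matrix.toLin' (Matrix.diagonal c)) ⁻¹' {v : E → ℝ | blN bl v ≤ 1} := by
    ext v
    simp only [Set.mem_ofPred_eq, Set.mem_preimage]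
    have : blN bl (Matrix.toLin' (Matrix.diagonal c) v) = (∑ j, wδ j *
      Real.sqrt (∑ d ∈ univ.filter (fun d => bl d = j), wd d * (v d) ^ 2)) / ε := by
      unfold blN
      rw [Finset.sum_div]
      refine Finset.sum_congr rfl fun j _ => ?_
      have hw := hwδ j
      rw [EuclideanSpace.norm_eq, mul_div_right_comm]
      conv_rhs => rw [← Real.sqrt_sq (show 0 ≤ wδ j / ε by positivity)]
      rw [← Real.sqrt_mul (sq_nonneg _)]
      congr 1
      rw [Finset.mul_sum, ← Finset.sum_subtype_eq_sum_filter, Finset.subtype_univ]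
      refine Finset.sum_congr rfl ?_
      rintro ⟨d, rfl⟩ _
      simp only [Matrix.toLin'_apply, Matrix.mulVec_diagonal, Real.norm_eq_abs, sq_abs, hc]
      have := Real.sq_sqrt (hwd d).le
      rw [mul_pow, div_pow, mul_pow, this]
      ring
    rw [this, div_le_one hε]
  have hdet : (Matrix.diagonal c).det ≠ 0 := by
    rw [Matrix.det_diagonal]; exact (Finset.prod_pos fun d _ => hcpos d).ne'
  rw [hset, Measure.addHaar_preimage_linearMap _ (by rwa [LinearMap.det_toLin']), LinearMap.det_toLin', aux_unit,
    ← ENNReal.ofReal_mul (abs_nonneg _)]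
  congr 1
  rw [Matrix.det_diagonal, abs_of_pos (inv_pos.2 (Finset.prod_pos fun d _ => hcpos d))]
  simp only [hc]
  rw [Finset.prod_div_distrib, Finset.prod_const, Finset.card_univ, inv_div]
  ring

open MeasureTheory in
lemma aux_g (a b : ℝ) (hab : a ≤ b) :
    (volume : Measure ℝ).map (fun t => t - max a (min b t)) =
      volume + ENNReal.ofReal (b - a) • Measure.dirac 0 := by
  have hm : Measurable (fun t : ℝ => t - max a (min b t)) := by fun_prop
  ext s hs
  rw [Measure.map_apply hm hs]
  have hms := hm hs
  rw [← measure_inter_add_sdiff _ (measurableSet_Icc (a := a) (b := b)),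
    ← measure_inter_add_sdiff (_ \ Set.Icc a b) (measurableSet_Iio (a := a))]
  have e1 : (((fun t => t - max a (min b t)) ⁻¹' s) \ Set.Icc a b) ∩ Set.Iio a =
     (fun t => t + (-a)) ⁻¹' (s ∩ Set.Iio 0) := by
    ext t
    simp only [Set.mem_inter_iff, Set.mem_diff, Set.mem_preimage, Set.mem_Icc, Set.mem_Iio]
    constructor
    · rintro ⟨⟨h1, h2⟩, h3⟩
      rw [min_eq_right (by linarith), max_eq_left h3.le] at h1
      exact ⟨h1, by linarith⟩
    · rintro ⟨h1, h2⟩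
      have h3 : t < a := by linarith
      rw [min_eq_right (by linarith), max_eq_left h3.le]
      exact ⟨⟨h1, fun h => by linarith [h.1]⟩, h3⟩
  have e2 : (((fun t => t - max a (min b t)) ⁻¹' s) \ Set.Icc a b) \ Set.Iio a =
     (fun t => t + (-b)) ⁻¹' (s ∩ Set.Ioi 0) := by
    ext t
    simp only [Set.mem_inter_iff, Set.mem_diff, Set.mem_preimage, Set.mem_Icc, Set.mem_Iio, Set.mem_Ioi]
    constructor
    · rintro ⟨⟨h1, h2⟩, h3⟩
      have h4 : b < t := by by_contra h; exact h2 ⟨by linarith, by linarith⟩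
      rw [min_eq_left (by linarith), max_eq_right hab] at h1
      exact ⟨h1, by linarith⟩
    · rintro ⟨h1, h2⟩
      have h3 : b < t := by linarith
      rw [min_eq_left (by linarith), max_eq_right hab]
      exact ⟨⟨h1, fun h => by linarith [h.2]⟩, by linarith⟩
  have e3 : volume (((fun t => t - max a (min b t)) ⁻¹' s) ∩ Set.Icc a b) =
      ENNReal.ofReal (b - a) * Measure.dirac 0 s := by
    have hz : ∀ t ∈ Set.Icc a b, t - max a (min b t) = 0 := fun t ht => by
      rw [min_eq_right ht.2, max_eq_right ht.1, sub_self]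
    rw [Measure.dirac_apply' _ hs]
    by_cases h0 : (0:ℝ) ∈ s
    · rw [Set.inter_eq_right.2 fun t ht => by simpa [hz t ht] using h0]
      simp [h0]
    · have : ((fun t => t - max a (min b t)) ⁻¹' s) ∩ Set.Icc a b = ∅ := by
        ext t
        simp only [Set.mem_inter_iff, Set.mem_preimage, Set.mem_empty_iff_false, iff_false, not_and]
        intro h ht
        rw [hz t ht] at h
        exact h0 h
      rw [this]
      simp [h0]
  rw [e1, e2, e3, measure_preimage_add_right, measure_preimage_add_right]
  simp only [Measure.add_apply, Measure.smul_apply, smul_eq_mul]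
  rw [add_comm]
  congr 1
  rw [← measure_inter_add_sdiff s (measurableSet_Iio (a := (0:ℝ)))]
  congr 1
  rw [Set.diff_eq, Set.compl_Iio]
  exact measure_congr (Filter.EventuallyEq.inter (Filter.EventuallyEq.refl _ _) Ioi_ae_eq_Ici)

/-- extension by zero -/
noncomputable def extZ {D : Type*} [DecidableEq D] (T : Finset D) (u : {d // d ∈ T} → ℝ) : D → ℝ :=
  fun d => if h : d ∈ T then u ⟨d, h⟩ else 0

lemma extZ_meas {D : Type*} [DecidableEq D] (T : Finset D) : Measurable (extZ T) := by
  refine measurable_pi_lambda _ fun d => ?_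
  unfold extZ
  by_cases h : d ∈ T
  · simp only [h, dite_true]; fun_prop
  · simp only [h, dite_false]; fun_prop

open MeasureTheory in
lemma aux_expand {D : Type*} [Fintype D] [DecidableEq D] (b : D → ℝ) :
    Measure.pi (fun d => (volume : Measure ℝ) + ENNReal.ofReal (b d) • Measure.dirac 0) =
      ∑ T ∈ (univ : Finset D).powerset, (∏ d ∈ univ \ T, ENNReal.ofReal (b d)) •
        (volume : Measure ({d // d ∈ T} → ℝ)).map (extZ T) := by
  haveI : ∀ d, SigmaFinite ((volume : Measure ℝ) + ENNReal.ofReal (b d) • Measure.dirac 0) := by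
    intro d
    haveI : IsFiniteMeasure (ENNReal.ofReal (b d) • (Measure.dirac 0 : Measure ℝ)) :=
      Measure.smul_finite _ ENNReal.ofReal_ne_top
    infer_instance
  refine Measure.pi_eq fun s hs => ?_
  simp only [Measure.coe_finsetSum, Finset.sum_apply, Measure.smul_apply, smul_eq_mul,
    Measure.add_apply]
  rw [Finset.prod_add]
  refine Finset.sum_congr rfl fun T _ => ?_
  rw [Measure.map_apply (extZ_meas T) (.univ_pi hs), Finset.prod_mul_distrib]
  rw [mul_left_comm]
  congr 1
  have hv : ∏ d ∈ T, volume (s d) = volume (Set.univ.pi fun d : {d // d ∈ T} => s d) := by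
    rw [volume_pi_pi]
    exact (Finset.prod_coe_sort T fun d => volume (s d)).symm
  rw [hv]
  by_cases h0 : ∀ d ∈ univ \ T, (0:ℝ) ∈ s d
  · rw [Finset.prod_eq_one fun d hd => by rw [Measure.dirac_apply' _ (hs d)]; simp [h0 d hd], mul_one]
    congr 1
    ext u
    simp only [Set.mem_preimage, Set.mem_univ_pi, extZ]
    constructor
    · rintro h ⟨d, hd⟩
      simpa [hd] using h d
    · intro h d
      by_cases hd : d ∈ T
      · simpa [hd] using h ⟨d, hd⟩
      · simpa [hd] using h0 d (by simpa using hd)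
  · push Not at h0
    obtain ⟨d, hd, h0⟩ := h0
    rw [Finset.prod_eq_zero hd (by rw [Measure.dirac_apply' _ (hs d)]; simp [h0]), mul_zero]
    convert measure_empty (μ := (volume : Measure ({d // d ∈ T} → ℝ)))
    ext u
    simp only [Set.mem_preimage, Set.mem_univ_pi, extZ, Set.mem_empty_iff_false, iff_false]
    intro h
    have := h d
    simp only [mem_sdiff, mem_univ, true_and] at hd
    simp only [hd, dite_false] at this
    exact h0 this

/-- The Lebesgue measure of the ε-neighborhood (under the
combined metric d_C) of a nonempty axis-parallel cuboid with side lengths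
b_d = p⁺_d − p⁻_d equals the sum over all subsets T ⊆ D of
(∏_{d∉T} b_d) · (1/∏_{d∈T} w_{δ(d)}·√w_d) · (ε^{|T|}/|T|!) ·
∏_{δ: δ∩T≠∅} (|δ∩T|!·π^{|δ∩T|/2}/Γ(|δ∩T|/2+1)).
The partition of `D` into nonempty domains is given by the fibers of the
surjective block map `bl : D → ι`. -/
theorem volume_eps_neighborhood_of_cuboid
    {D ι : Type*} [Fintype D] [Nonempty D] [DecidableEq D]
    [Fintype ι] [DecidableEq ι]
    (bl : D → ι) (hbl : Function.Surjective bl)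
    (wδ : ι → ℝ) (wd : D → ℝ)
    (hwδ : ∀ j, 0 < wδ j) (hwd : ∀ d, 0 < wd d)
    (dC : (D → ℝ) → (D → ℝ) → ℝ)
    (hdC : ∀ x y, dC x y = ∑ j : ι, wδ j *
      Real.sqrt (∑ d ∈ univ.filter (fun d => bl d = j), wd d * (x d - y d) ^ 2))
    (pm pp : D → ℝ) (hple : ∀ d, pm d ≤ pp d)
    (C : Set (D → ℝ))
    (hC : C = {x : D → ℝ | ∀ d, pm d ≤ x d ∧ x d ≤ pp d})
    (ε : ℝ) (hε : 0 < ε) :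
    MeasureTheory.volume {x : D → ℝ | sInf ((fun y => dC x y) '' C) ≤ ε} =
      ENNReal.ofReal
        (∑ T ∈ (univ : Finset D).powerset,
          (∏ d ∈ univ \ T, (pp d - pm d)) *
          (1 / ∏ d ∈ T, (wδ (bl d) * Real.sqrt (wd d))) *
          (ε ^ T.card / (Nat.factorial T.card : ℝ)) *
          ∏ j ∈ univ.filter (fun j => T.filter (fun d => bl d = j) ≠ ∅),
            ((Nat.factorial (T.filter (fun d => bl d = j)).card : ℝ) *
              Real.pi ^ (((T.filter (fun d => bl d = j)).card : ℝ) / 2) /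
              Real.Gamma (((T.filter (fun d => bl d = j)).card : ℝ) / 2 + 1))) := by
  set b : D → ℝ := fun d => pp d - pm d with hb
  have hb0 : ∀ d, 0 ≤ b d := fun d => sub_nonneg.2 (hple d)
  set N : (D → ℝ) → ℝ := fun v => ∑ j, wδ j *
      Real.sqrt (∑ d ∈ univ.filter (fun d => bl d = j), wd d * (v d) ^ 2) with hN
  have hNc : Continuous N := by
    simp only [hN]; fun_prop
  set g : (D → ℝ) → (D → ℝ) := fun x d => x d - max (pm d) (min (pp d) (x d)) with hg
  have hgm : Measurable g := by
    simp only [hg]; fun_prop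
  have hinf : ∀ x, sInf ((fun y => dC x y) '' C) = N (g x) := by
    intro x
    refine IsLeast.csInf_eq ⟨⟨fun d => max (pm d) (min (pp d) (x d)), ?_, ?_⟩, ?_⟩
    · rw [hC]
      exact fun d => ⟨le_max_left _ _, max_le (hple d) (min_le_left _ _)⟩
    · simp only [hdC, hN, hg]
    · rintro _ ⟨y, hy, rfl⟩
      rw [hC] at hy
      simp only [hdC, hN, hg]
      refine Finset.sum_le_sum fun j _ => mul_le_mul_of_nonneg_left ?_ (hwδ j).le
      refine Real.sqrt_le_sqrt (Finset.sum_le_sum fun d _ =>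
        mul_le_mul_of_nonneg_left ?_ (hwd d).le)
      obtain ⟨hy1, hy2⟩ := hy d
      rw [sq_le_sq]
      rcases le_total (x d) (pp d) with h1 | h1
      · rw [min_eq_right h1]
        rcases le_total (x d) (pm d) with h2 | h2
        · rw [max_eq_left h2, abs_of_nonpos (by linarith), abs_of_nonpos (by linarith)]; linarith
        · rw [max_eq_right h2]; simp
      · rw [min_eq_left h1, max_eq_right (hple d), abs_of_nonneg (by linarith),
          abs_of_nonneg (by linarith)]; linarith
  have hms : MeasurableSet {v : D → ℝ | N v ≤ ε} := (isClosed_le hNc continuous_const).measurableSet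
  have hset : {x : D → ℝ | sInf ((fun y => dC x y) '' C) ≤ ε} = g ⁻¹' {v | N v ≤ ε} := by
    ext x; simp only [Set.mem_ofPred_eq, hinf, Set.mem_preimage]
  have hmap : (MeasureTheory.volume : MeasureTheory.Measure (D → ℝ)).map g =
      MeasureTheory.Measure.pi (fun d => (MeasureTheory.volume : MeasureTheory.Measure ℝ) +
        ENNReal.ofReal (b d) • MeasureTheory.Measure.dirac 0) := by
    haveI : ∀ d, MeasureTheory.SigmaFinite ((MeasureTheory.volume : MeasureTheory.Measure ℝ).map
        (fun t => t - max (pm d) (min (pp d) t))) := by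
      intro d
      rw [aux_g _ _ (hple d)]
      haveI : MeasureTheory.IsFiniteMeasure (ENNReal.ofReal (pp d - pm d) •
          (MeasureTheory.Measure.dirac 0 : MeasureTheory.Measure ℝ)) :=
        MeasureTheory.Measure.smul_finite _ ENNReal.ofReal_ne_top
      infer_instance
    have := MeasureTheory.Measure.pi_map_pi
      (μ := fun _ : D => (MeasureTheory.volume : MeasureTheory.Measure ℝ))
      (f := fun d t => t - max (pm d) (min (pp d) t)) (fun d => by fun_prop)
    rw [MeasureTheory.volume_pi, hg, this]
    congr 1
    ext1 d
    exact aux_g _ _ (hple d)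
  rw [hset, ← MeasureTheory.Measure.map_apply hgm hms, hmap, aux_expand]
  simp only [MeasureTheory.Measure.coe_finsetSum, Finset.sum_apply,
    MeasureTheory.Measure.smul_apply, smul_eq_mul]
  have hGpos : ∀ n : ℕ, 0 < Real.Gamma ((n : ℝ) / 2 + 1) :=
    fun n => Real.Gamma_pos_of_pos (by positivity)
  have hpi := Real.pi_pos
  have hrest : ∀ T : Finset D, 0 ≤ (1 / ∏ d ∈ T, (wδ (bl d) * Real.sqrt (wd d))) *
          (ε ^ T.card / (Nat.factorial T.card : ℝ)) *
          ∏ j ∈ univ.filter (fun j => T.filter (fun d => bl d = j) ≠ ∅),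
            ((Nat.factorial (T.filter (fun d => bl d = j)).card : ℝ) *
              Real.pi ^ (((T.filter (fun d => bl d = j)).card : ℝ) / 2) /
              Real.Gamma (((T.filter (fun d => bl d = j)).card : ℝ) / 2 + 1)) := by
    intro T
    refine mul_nonneg (mul_nonneg (one_div_nonneg.2 (Finset.prod_nonneg fun d _ =>
      mul_nonneg (hwδ _).le (Real.sqrt_nonneg _))) (by positivity)) (Finset.prod_nonneg fun j _ => ?_)
    have := hGpos (T.filter (fun d => bl d = j)).card
    positivity
  rw [ENNReal.ofReal_sum_of_nonneg]
  swap
  · intro T _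
    rw [mul_assoc, mul_assoc, ← mul_assoc (1 / _)]
    exact mul_nonneg (Finset.prod_nonneg fun d _ => hb0 d) (hrest T)
  refine Finset.sum_congr rfl fun T _ => ?_
  rw [mul_assoc, mul_assoc, ← mul_assoc (1 / _), ENNReal.ofReal_mul (Finset.prod_nonneg fun d _ => hb0 d),
    ENNReal.ofReal_prod_of_nonneg (fun d _ => hb0 d)]
  congr 1
  rw [MeasureTheory.Measure.map_apply (extZ_meas T) hms]
  have hsum : ∀ (j : ι) (u : {d // d ∈ T} → ℝ),
      ∑ d ∈ univ.filter (fun d => bl d = j), wd d * (extZ T u d) ^ 2 =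
      ∑ d ∈ univ.filter (fun d : {d // d ∈ T} => bl d = j), wd d * (u d) ^ 2 := by
    intro j u
    rw [Finset.sum_filter, Finset.sum_filter]
    rw [← Finset.sum_subset (Finset.subset_univ T), ← Finset.sum_coe_sort T]
    · refine Finset.sum_congr rfl ?_
      rintro ⟨d, hd⟩ _
      simp [extZ, hd]
    · intro d _ hd
      simp [extZ, hd]
  have hpre : extZ T ⁻¹' {v | N v ≤ ε} = {u : {d // d ∈ T} → ℝ | ∑ j, wδ j *
      Real.sqrt (∑ d ∈ univ.filter (fun d : {d // d ∈ T} => bl d = j), wd d * (u d) ^ 2) ≤ ε} := by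
    ext u
    simp only [Set.mem_preimage, Set.mem_ofPred_eq, hN, hsum]
  rw [hpre, aux_scaled (fun d : {d // d ∈ T} => bl d) wδ (fun d => wd d) hwδ (fun d => hwd d) ε hε]
  have hcard : ∀ j, Fintype.card {d : {d // d ∈ T} // bl d = j} =
      (T.filter (fun d => bl d = j)).card := by
    intro j
    rw [Fintype.card_subtype, ← Finset.card_map (Function.Embedding.subtype _)]
    congr 1
    ext d
    simp [and_comm]
  congr 2
  · congr 2
    · rw [Finset.prod_coe_sort T (fun d => wδ (bl d) * Real.sqrt (wd d))]
    · rw [Fintype.card_coe]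
    · rw [Fintype.card_coe]
  · rw [Finset.prod_filter]
    refine Finset.prod_congr rfl fun j _ => ?_
    rw [hcard]
    split_ifs with h
    · rfl
    · rw [not_not] at h
      simp [h]
end

section
/- Let D be a finite nonempty index set with n = |D|, partitioned into a collection Δ of nonempty domains δ ⊆ D, with positive weights w_δ > 0 and w_d > 0, and let d_C(x,y) = Σ_{δ∈Δ} w_δ · √(Σ_{d∈δ} w_d·(x_d − y_d)²); for d ∈ D write δ(d) for the unique domain containing d. Let C = {x ∈ ℝ^D : ∀d, p⁻_d ≤ x_d ≤ p⁺_d} be a nonempty axis-parallel cuboid with side lengths b_d = p⁺_d − p⁻_d, let μ₀ ∈ (0,1] and c > 0, and define the fuzzified cuboid membership μ(x) = μ₀ · max_{y∈C} e^{−c·d_C(x,y)}. Set a_d = w_{δ(d)} · √(w_d) · b_d · c. Then the integral ∫_{ℝ^D} μ(x) dx equals ( μ₀ / ( cⁿ · ∏_{d∈D} (w_{δ(d)} · √(w_d)) ) ) · Σ_{T⊆D} ( ∏_{d ∈ D∖T} a_d ) · ∏_{δ∈Δ, δ∩T ≠ ∅} ( |δ∩T|! · π^{|δ∩T|/2} /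 Γ(|δ∩T|/2 + 1) ), where the sum runs over all subsets T of D (with the empty product equal to 1). -/
open Finset MeasureTheory

lemma fc_map_clamp (p q : ℝ) (h : p ≤ q) :
    Measure.map (fun t : ℝ => t - max p (min q t)) volume
      = volume + ENNReal.ofReal (q - p) • Measure.dirac 0 := by
  have hm : Measurable (fun t : ℝ => t - max p (min q t)) := by fun_prop
  ext S hS
  rw [Measure.map_apply hm hS]
  have e1 : (fun t : ℝ => t - max p (min q t)) ⁻¹' S =
      ((fun t => t + (-p)) ⁻¹' (S ∩ Set.Iio 0)) ∪ (((fun t => t + (-q)) ⁻¹' (S ∩ Set.Ioi 0)) ∪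
        (Set.Icc p q ∩ {_t | (0:ℝ) ∈ S})) := by
    ext t
    simp only [Set.mem_preimage, Set.mem_union, Set.mem_inter_iff, Set.mem_Iio, Set.mem_Ioi,
      Set.mem_Icc, Set.mem_ofPred_eq]
    rcases lt_or_ge t p with h1 | h1
    · have : max p (min q t) = p := max_eq_left ((min_le_right _ _).trans h1.le)
      rw [this]
      constructor
      · intro hh; left; exact ⟨by simpa [sub_eq_add_neg] using hh, by linarith⟩
      · rintro (hh | hh | hh)
        · simpa [sub_eq_add_neg] using hh.1
        · linarith [hh.2]
        · linarith [hh.1.1]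
    · rcases le_or_gt t q with h2 | h2
      · have : max p (min q t) = t := by rw [min_eq_right h2, max_eq_right h1]
        rw [this, sub_self]
        constructor
        · intro hh; right; right; exact ⟨⟨h1, h2⟩, hh⟩
        · rintro (hh | hh | hh)
          · linarith [hh.2]
          · linarith [hh.2]
          · exact hh.2
      · have : max p (min q t) = q := by rw [min_eq_left h2.le, max_eq_right h]
        rw [this]
        constructor
        · intro hh; right; left; exact ⟨by simpa [sub_eq_add_neg] using hh, by linarith⟩
        · rintro (hh | hh | hh)
          · linarith [hh.2]
          · simpa [sub_eq_add_neg] using hh.1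
          · linarith [hh.1.2]
  rw [e1, measure_union, measure_union, measure_preimage_add_right, measure_preimage_add_right]
  · have e2 : volume S = volume (S ∩ Set.Iio 0) + volume (S ∩ Set.Ioi (0:ℝ)) := by
      rw [← measure_inter_add_sdiff S (measurableSet_Iio (a := (0:ℝ)))]
      congr 1
      have : S \ Set.Iio 0 = S ∩ Set.Ici (0:ℝ) := by ext; simp
      rw [this]
      exact measure_congr (Filter.EventuallyEq.inter (Filter.EventuallyEq.refl _ _) Ioi_ae_eq_Ici.symm)
    have e3 : volume (Set.Icc p q ∩ {_t | (0:ℝ) ∈ S}) = ENNReal.ofReal (q-p) * S.indicator 1 0 := by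
      by_cases h0 : (0:ℝ) ∈ S <;> simp [h0]
    rw [Measure.add_apply, Measure.smul_apply, Measure.dirac_apply' _ hS, e3, e2, smul_eq_mul, add_assoc]
  · rw [Set.disjoint_left]
    rintro t ht ht'
    have := ht.2; have := ht'.1.2; simp at *; linarith
  · exact measurableSet_Icc.inter (by simp)
  · rw [Set.disjoint_left]
    rintro t ht (ht' | ht')
    · have := ht.2; have := ht'.2; simp at *; linarith
    · have := ht.2; have := ht'.1.1; simp at *; linarith
  · exact ((hS.inter measurableSet_Ioi).preimage (by fun_prop)).union (measurableSet_Icc.inter (by simp))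

lemma fc_map_scale (p q k : ℝ) (h : p ≤ q) (hk : 0 < k) :
    Measure.map (fun t : ℝ => k * (t - max p (min q t))) volume
      = ENNReal.ofReal k⁻¹ • (volume + ENNReal.ofReal (k * (q - p)) • Measure.dirac 0) := by
  have := Measure.map_map (μ := volume) (g := fun t : ℝ => k * t)
    (f := fun t : ℝ => t - max p (min q t)) (by fun_prop) (by fun_prop)
  change _ = Measure.map (fun t : ℝ => k * (t - max p (min q t))) volume at this
  rw [← this, fc_map_clamp p q h, Measure.map_add _ _ (by fun_prop), Measure.map_smul,
    Measure.map_dirac' (by fun_prop), Real.map_volume_mul_left hk.ne', abs_of_pos (inv_pos.2 hk),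
    smul_add, smul_smul, ← ENNReal.ofReal_mul (inv_pos.2 hk).le, mul_zero, inv_mul_cancel_left₀ hk.ne']

lemma fc_ball (κ : Type*) [Fintype κ] [Nonempty κ] :
    ∫ z : κ → ℝ, Real.exp (- Real.sqrt (∑ i, z i ^ 2)) =
      (Nat.factorial (Fintype.card κ) : ℝ) * Real.pi ^ ((Fintype.card κ : ℝ) / 2) /
        Real.Gamma ((Fintype.card κ : ℝ) / 2 + 1) := by
  have h1 := MeasureTheory.measure_unitBall_eq_integral_div_gamma
    (μ := (volume : Measure (EuclideanSpace ℝ κ))) (p := 1) one_pos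
  rw [EuclideanSpace.volume_ball] at h1
  have hG := Real.Gamma_pos_of_pos (s := (Fintype.card κ : ℝ) / 2 + 1) (by positivity)
  simp only [ENNReal.ofReal_one, one_pow, one_mul, Real.rpow_one, div_one, finrank_euclideanSpace,
    Real.Gamma_nat_eq_factorial] at h1
  rw [ENNReal.ofReal_eq_ofReal_iff (by positivity) (div_nonneg (integral_nonneg fun _ => (Real.exp_pos _).le) (by positivity))] at h1
  have h2 := (EuclideanSpace.volume_preserving_symm_measurableEquiv_toLp κ).symm.integral_comp'
    (g := fun x : EuclideanSpace ℝ κ => Real.exp (- ‖x‖))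
  have h3 : ∫ z : κ → ℝ, Real.exp (- Real.sqrt (∑ i, z i ^ 2)) = ∫ x : EuclideanSpace ℝ κ, Real.exp (- ‖x‖) := by
    rw [← h2]
    congr 1; ext z
    simp [EuclideanSpace.norm_eq]
  rw [h3]
  rw [eq_div_iff (by positivity)] at h1
  rw [← h1, mul_comm, mul_div_assoc]
  congr 2
  rw [Real.sqrt_eq_rpow, ← Real.rpow_natCast, ← Real.rpow_mul Real.pi_pos.le]
  ring_nf

/-- the coordinate measures -/
noncomputable def fcRho {D : Type*} [DecidableEq D] (T : Finset D) (d : D) : Measure ℝ :=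
  if d ∈ T then volume else Measure.dirac 0

instance {D : Type*} [DecidableEq D] (T : Finset D) (d : D) : SigmaFinite (fcRho T d) := by
  unfold fcRho; split_ifs <;> infer_instance

/-- extension by zero and gluing of blocks -/
def fcE {D ι : Type*} [DecidableEq D] (bl : D → ι) (T : Finset D)
    (z : ∀ j, {d // d ∈ T ∧ bl d = j} → ℝ) (d : D) : ℝ :=
  if h : d ∈ T then z (bl d) ⟨d, h, rfl⟩ else 0

lemma fcE_meas {D ι : Type*} [DecidableEq D] (bl : D → ι) (T : Finset D) :
    Measurable (fcE bl T) := by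
  rw [measurable_pi_iff]
  intro d
  unfold fcE
  split_ifs <;> fun_prop

lemma fc_pi {D ι : Type*} [Fintype D] [DecidableEq D] [Fintype ι] [DecidableEq ι]
    (bl : D → ι) (T : Finset D) :
    Measure.pi (fcRho T) = Measure.map (fcE bl T)
      (Measure.pi fun j : ι => (Measure.pi fun _ : {d // d ∈ T ∧ bl d = j} => (volume : Measure ℝ))) := by
  refine Measure.pi_eq ?_
  intro s hs
  rw [Measure.map_apply (fcE_meas bl T) (MeasurableSet.univ_pi hs)]
  have hR : ∏ d, fcRho T d (s d) = (∏ d ∈ T, volume (s d)) * ∏ d ∈ Tᶜ, (s d).indicator 1 0 := by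
    rw [← Finset.prod_mul_prod_compl T]
    congr 1
    · exact Finset.prod_congr rfl fun d hd => by simp [fcRho, hd]
    · refine Finset.prod_congr rfl fun d hd => ?_
      rw [Finset.mem_compl] at hd
      simp only [fcRho, hd, if_false]
      exact Measure.dirac_apply' _ (hs d)
  rw [hR]
  by_cases h0 : ∀ d, d ∉ T → (0:ℝ) ∈ s d
  · have e : fcE bl T ⁻¹' (Set.univ.pi s) = Set.univ.pi fun j : ι =>
        Set.univ.pi fun i : {d // d ∈ T ∧ bl d = j} => s i.1 := by
      ext z
      simp only [Set.mem_preimage, Set.mem_univ_pi, fcE]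
      constructor
      · rintro h j ⟨d, hd, rfl⟩
        have := h d
        simpa [hd] using this
      · intro h d
        split_ifs with hd
        · exact h (bl d) ⟨d, hd, rfl⟩
        · exact h0 d hd
    rw [e, Measure.pi_pi]
    simp_rw [Measure.pi_pi]
    have : ∏ d ∈ Tᶜ, (s d).indicator (1 : ℝ → ENNReal) 0 = 1 :=
      Finset.prod_eq_one fun d hd => by
        rw [Finset.mem_compl] at hd
        simp [h0 d hd]
    rw [this, mul_one, ← Finset.prod_fiberwise T bl]
    refine Finset.prod_congr rfl fun j _ => ?_
    exact (Finset.prod_subtype (T.filter fun d => bl d = j) (by simp) (fun d => volume (s d))).symm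
  · push Not at h0
    obtain ⟨d, hd, hs0⟩ := h0
    have e : fcE bl T ⁻¹' (Set.univ.pi s) = ∅ := by
      ext z
      simp only [Set.mem_preimage, Set.mem_univ_pi, fcE, Set.mem_empty_iff_false, iff_false]
      intro h
      have := h d
      simp [hd] at this
      exact hs0 this
    rw [e, measure_empty, Finset.prod_eq_zero (Finset.mem_compl.2 hd) (by simp [hs0]), mul_zero]

/-- the target function -/
noncomputable def fcF {D ι : Type*} [Fintype D] [Fintype ι] [DecidableEq ι] (bl : D → ι)
    (y : D → ℝ) : ℝ :=
  ∏ j, Real.exp (- Real.sqrt (∑ d ∈ univ.filter (fun d => bl d = j), y d ^ 2))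

lemma fcF_cont {D ι : Type*} [Fintype D] [Fintype ι] [DecidableEq ι] (bl : D → ι) :
    Continuous (fcF bl) := by
  unfold fcF; fun_prop

lemma fc_int {D ι : Type*} [Fintype D] [DecidableEq D] [Fintype ι] [DecidableEq ι]
    (bl : D → ι) (T : Finset D) :
    ∫ y, fcF bl y ∂(Measure.pi (fcRho T)) =
      ∏ j ∈ univ.filter (fun j => T.filter (fun d => bl d = j) ≠ ∅),
            ((Nat.factorial (T.filter (fun d => bl d = j)).card : ℝ) *
              Real.pi ^ (((T.filter (fun d => bl d = j)).card : ℝ) / 2) /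
              Real.Gamma (((T.filter (fun d => bl d = j)).card : ℝ) / 2 + 1)) := by
  rw [fc_pi bl T, integral_map (fcE_meas bl T).aemeasurable (fcF_cont bl).aestronglyMeasurable]
  have e : ∀ z, fcF bl (fcE bl T z) = ∏ j, Real.exp (- Real.sqrt (∑ i, z j i ^ 2)) := by
    intro z
    unfold fcF
    refine Finset.prod_congr rfl fun j _ => ?_
    congr 3
    have : ∑ d ∈ univ.filter (fun d => bl d = j), fcE bl T z d ^ 2
        = ∑ d ∈ T.filter (fun d => bl d = j), fcE bl T z d ^ 2 := by
      symm
      refine Finset.sum_subset (by intro; simp) ?_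
      intro d h1 h2
      have : d ∉ T := by simp_all
      simp [fcE, this]
    rw [this, Finset.sum_subtype (p := fun d => d ∈ T ∧ bl d = j) _ (by simp)]
    refine Finset.sum_congr rfl ?_
    rintro ⟨d, hd, rfl⟩ _
    simp [fcE, hd]
  simp_rw [e]
  rw [integral_fintype_prod_eq_prod (𝕜 := ℝ)
    (fun j (w : {d // d ∈ T ∧ bl d = j} → ℝ) => Real.exp (- Real.sqrt (∑ i, w i ^ 2)))]
  rw [Finset.prod_filter]
  refine Finset.prod_congr rfl fun j _ => ?_
  have hcard : Fintype.card {d // d ∈ T ∧ bl d = j} = (T.filter (fun d => bl d = j)).card :=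
    Fintype.card_of_subtype _ (by simp)
  split_ifs with h
  · have : Nonempty {d // d ∈ T ∧ bl d = j} := by
      rw [← Fintype.card_pos_iff, hcard, Finset.card_pos, Finset.nonempty_iff_ne_empty]; exact h
    rw [← hcard]
    exact fc_ball _
  · have : IsEmpty {d // d ∈ T ∧ bl d = j} := by
      rw [← Fintype.card_eq_zero_iff, hcard, Finset.card_eq_zero]; simpa using h
    simp [measureReal_def, Measure.pi_univ]

lemma fc_expand {D : Type*} [Fintype D] [DecidableEq D] (k a : D → ENNReal) (ν : D → Measure ℝ) [∀ d, SigmaFinite (ν d)]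
    (hν : ∀ d, ν d = k d • (volume + a d • Measure.dirac 0)) :
    Measure.pi ν = (∏ d, k d) • ∑ T ∈ (univ : Finset D).powerset,
      (∏ d ∈ univ \ T, a d) • Measure.pi (fcRho T) := by
  refine Measure.pi_eq fun s hs => ?_
  simp only [hν, Measure.smul_apply, Measure.add_apply, Measure.finsetSum_apply, smul_eq_mul,
    Finset.prod_mul_distrib, Measure.pi_pi]
  congr 1
  rw [Finset.prod_add]
  refine Finset.sum_congr rfl fun T _ => ?_
  rw [← Finset.prod_sdiff (Finset.subset_univ T) (f := fun d => fcRho T d (s d)), Finset.prod_mul_distrib,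
    mul_comm (∏ d ∈ T, _), mul_assoc]
  congr 2
  · exact Finset.prod_congr rfl fun d hd => by simp [fcRho, (Finset.mem_sdiff.1 hd).2]
  · exact Finset.prod_congr rfl fun d hd => by simp [fcRho, hd]

/-- The measure (integral of the membership function) of a
fuzzified cuboid equals
(μ₀/(cⁿ·∏_d w_{δ(d)}·√w_d)) · Σ_{T⊆D} (∏_{d∉T} a_d) ·
∏_{δ: δ∩T≠∅} (|δ∩T|!·π^{|δ∩T|/2}/Γ(|δ∩T|/2+1)),
where a_d = w_{δ(d)}·√w_d·b_d·c and b_d = p⁺_d − p⁻_d.  The partition of `D`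
into nonempty domains is given by the fibers of the surjective block map
`bl : D → ι`. -/
theorem measure_of_fuzzified_cuboid
    {D ι : Type*} [Fintype D] [Nonempty D] [DecidableEq D]
    [Fintype ι] [DecidableEq ι]
    (bl : D → ι) (hbl : Function.Surjective bl)
    (wδ : ι → ℝ) (wd : D → ℝ)
    (hwδ : ∀ j, 0 < wδ j) (hwd : ∀ d, 0 < wd d)
    (dC : (D → ℝ) → (D → ℝ) → ℝ)
    (hdC : ∀ x y, dC x y = ∑ j : ι, wδ j *
      Real.sqrt (∑ d ∈ univ.filter (fun d => bl d = j), wd d * (x d - y d) ^ 2))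
    (n : ℕ) (hn : n = Fintype.card D)
    (pm pp : D → ℝ) (hple : ∀ d, pm d ≤ pp d)
    (C : Set (D → ℝ))
    (hC : C = {x : D → ℝ | ∀ d, pm d ≤ x d ∧ x d ≤ pp d})
    (μ₀ c : ℝ) (hμ₀ : μ₀ ∈ Set.Ioc (0 : ℝ) 1) (hc : 0 < c)
    (μ : (D → ℝ) → ℝ)
    (hμ : ∀ x, μ x = μ₀ * sSup ((fun y => Real.exp (-c * dC x y)) '' C))
    (a : D → ℝ)
    (ha : ∀ d, a d = wδ (bl d) * Real.sqrt (wd d) * (pp d - pm d) * c) :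
    ∫ x : D → ℝ, μ x =
      (μ₀ / (c ^ n * ∏ d : D, (wδ (bl d) * Real.sqrt (wd d)))) *
        ∑ T ∈ (univ : Finset D).powerset,
          (∏ d ∈ univ \ T, a d) *
          ∏ j ∈ univ.filter (fun j => T.filter (fun d => bl d = j) ≠ ∅),
            ((Nat.factorial (T.filter (fun d => bl d = j)).card : ℝ) *
              Real.pi ^ (((T.filter (fun d => bl d = j)).card : ℝ) / 2) /
              Real.Gamma (((T.filter (fun d => bl d = j)).card : ℝ) / 2 + 1)) := by
  set k : D → ℝ := fun d => c * (wδ (bl d) * Real.sqrt (wd d)) with hkdef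
  have hk : ∀ d, 0 < k d := fun d =>
    mul_pos hc (mul_pos (hwδ _) (Real.sqrt_pos.2 (hwd d)))
  have hak : ∀ d, a d = k d * (pp d - pm d) := fun d => by rw [ha, hkdef]; ring
  have ha0 : ∀ d, 0 ≤ a d := fun d => by
    rw [hak]; exact mul_nonneg (hk d).le (sub_nonneg.2 (hple d))
  set g : D → ℝ → ℝ := fun d t => k d * (t - max (pm d) (min (pp d) t)) with hg
  have hgm : ∀ d, Measurable (g d) := fun d => by rw [hg]; fun_prop
  have hmu : ∀ x, μ x = μ₀ * fcF bl (fun d => g d (x d)) := by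
    intro x
    rw [hμ]
    congr 1
    set y0 : D → ℝ := fun d => max (pm d) (min (pp d) (x d)) with hy0
    have hgr : IsGreatest ((fun y => Real.exp (-c * dC x y)) '' C) (Real.exp (-c * dC x y0)) := by
      constructor
      · refine ⟨y0, ?_, rfl⟩
        rw [hC]
        exact fun d => ⟨le_max_left _ _, max_le (hple d) (min_le_left _ _)⟩
      · rintro _ ⟨y, hy, rfl⟩
        rw [hC] at hy
        refine Real.exp_le_exp.2 ?_
        rw [neg_mul, neg_mul, neg_le_neg_iff]
        refine mul_le_mul_of_nonneg_left ?_ hc.le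
        rw [hdC, hdC]
        refine Finset.sum_le_sum fun j _ => mul_le_mul_of_nonneg_left (Real.sqrt_le_sqrt ?_) (hwδ j).le
        refine Finset.sum_le_sum fun d _ => mul_le_mul_of_nonneg_left (sq_le_sq.2 ?_) (hwd d).le
        have h1 := (hy d).1
        have h2 := (hy d).2
        rw [hy0]
        simp only
        rcases le_total (pp d) (x d) with h | h
        · rw [min_eq_left h, max_eq_right (hple d), abs_of_nonneg (by linarith), abs_of_nonneg (by linarith)]
          linarith
        · rw [min_eq_right h]
          rcases le_total (pm d) (x d) with h' | h'
          · rw [max_eq_right h']; simp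
          · rw [max_eq_left h', abs_of_nonpos (by linarith), abs_of_nonpos (by linarith)]
            linarith
    rw [hgr.csSup_eq, hdC, Finset.mul_sum, Real.exp_sum]
    unfold fcF
    refine Finset.prod_congr rfl fun j _ => ?_
    rw [neg_mul, ← mul_assoc]
    congr 2
    have : ∑ d ∈ univ.filter (fun d => bl d = j), (g d (x d)) ^ 2
        = (c * wδ j) ^ 2 * ∑ d ∈ univ.filter (fun d => bl d = j), wd d * (x d - y0 d) ^ 2 := by
      rw [Finset.mul_sum]
      refine Finset.sum_congr rfl fun d hd => ?_
      rw [Finset.mem_filter] at hd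
      rw [← hd.2]
      simp only [hg, hkdef, hy0]
      rw [mul_pow, mul_pow, mul_pow, mul_pow, Real.sq_sqrt (hwd d).le]
      ring
    rw [this, Real.sqrt_mul (sq_nonneg _), Real.sqrt_sq (mul_pos hc (hwδ j)).le]
  simp_rw [hmu]
  rw [integral_const_mul]
  have hmap : ∀ d, Measure.map (g d) volume = ENNReal.ofReal (k d)⁻¹ •
      (volume + ENNReal.ofReal (a d) • Measure.dirac 0) := fun d => by
    rw [hak]; exact fc_map_scale _ _ _ (hple d) (hk d)
  have : ∀ d, SigmaFinite (Measure.map (g d) volume) := fun d => by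
    rw [hmap]
    exact inferInstanceAs (SigmaFinite (Real.toNNReal (k d)⁻¹ •
      (volume + (Real.toNNReal (a d)) • Measure.dirac (0:ℝ))))
  have hpi : Measure.map (fun (x : D → ℝ) d => g d (x d)) volume =
      Measure.pi (fun d => Measure.map (g d) volume) :=
    (Measure.pi_map_pi fun d => (hgm d).aemeasurable)
  have hgm' : Measurable (fun (x : D → ℝ) d => g d (x d)) := by
    rw [measurable_pi_iff]; exact fun d => (hgm d).comp (measurable_pi_apply d)
  rw [← integral_map (f := fcF bl) hgm'.aemeasurable (fcF_cont bl).aestronglyMeasurable, hpi,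
    fc_expand _ _ _ hmap,
    integral_smul_measure, integral_finsetSum_measure]
  · simp_rw [integral_smul_measure, fc_int, ENNReal.toReal_prod, smul_eq_mul,
      ENNReal.toReal_ofReal (ha0 _), ENNReal.toReal_ofReal (inv_pos.2 (hk _)).le]
    rw [← mul_assoc, Finset.prod_inv_distrib, hkdef, Finset.prod_mul_distrib, Finset.prod_const,
      Finset.card_univ, hn, div_eq_mul_inv]
  · intro T _
    refine Integrable.smul_measure ?_ (ENNReal.prod_ne_top fun _ _ => ENNReal.ofReal_ne_top)
    refine Integrable.of_integral_ne_zero ?_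
    rw [fc_int]
    refine Finset.prod_ne_zero_iff.2 fun j _ => ?_
    have := Real.Gamma_pos_of_pos (s := ((T.filter (fun d => bl d = j)).card : ℝ) / 2 + 1) (by positivity)
    positivity
end
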